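/- Fix integers k ≥ 1 and k₀, k₁, k₂ ≥ 0 with k₀ + k₁ + k₂ = k and k₀·k₂ = 0. Call a (k,3)-admissible configuration a finitely supported sequence (a_i)_{i≥0} of nonnegative integers with a_i + a_{i+1} + a_{i+2} ≤ k for all i ≥ 0, a₀ ≤ k₀, and a₀ + a₁ ≤ k₀ + k₁; its charge is (∑_{t≥0} a_{2t}, ∑_{t≥0} a_{2t+1}) and its degree is ∑_{t≥0} (t+1)·(a_{2t} + a_{2t+1}). Then for all nonnegative integers n₁, n₂, d, the number of (k,3)-admissible configurations of charge (n₁, n₂) and degree d equals the sum, over all tuples of nonnegative integers (M_{i,c})_{i=1,2; c=1,…,k} with ∑_{c=1}^{k} c·M_{1,c} = n₁ and ∑_{c=1}^{k} c·M_{2,c} = n₂, of the number of 2k-tuples of partitions (λ^{(i,c)}) such that λ^{(i,c)} has at most M_{i,c} parts and ∑_{i,c} |λ^{(i,c)}| = d − E(M), where E(M) = ∑_{c,c'} min(c,c') M_{1,c} M_{1,c'} + ∑_{c,c'} max(0, c+c'−k) M_{1,c} M_{2,c'} + ∑_{c,c'} min(c,c') M_{2,c} M_{2,c'} + ∑_{c}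 max(0, c−k₀) M_{1,c} + ∑_{c} max(0, c−k₀−k₁) M_{2,c}. -/

import Mathlib

/-- A `(k,3)`-admissible configuration (for `Λ` determined by `k₀, k₁`): a finitely
supported sequence of nonnegative integers satisfying the difference and initial
conditions. -/
def IsAdmissibleConfig (k k₀ k₁ : ℕ) (a : ℕ →₀ ℕ) : Prop :=
  (∀ i : ℕ, a i + a (i + 1) + a (i + 2) ≤ k) ∧ a 0 ≤ k₀ ∧ a 0 + a 1 ≤ k₀ + k₁

/-- The charge `(∑_t a_{2t}, ∑_t a_{2t+1})` of a configuration. -/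
def configCharge (a : ℕ →₀ ℕ) : ℕ × ℕ :=
  (a.sum fun i v => if Even i then v else 0, a.sum fun i v => if Odd i then v else 0)

/-- The degree `∑_t (t+1)(a_{2t} + a_{2t+1})` of a configuration. -/
def configDegree (a : ℕ →₀ ℕ) : ℕ :=
  a.sum fun i v => (i / 2 + 1) * v

/-- The exponent `E(M) = ᵗM Q^{(k)} M + L^{(k)}_Λ · M` of the fermionic formula, where
`M i j` is the number of quasi-particles of color `γ_{i+1}` and charge `j + 1`. -/
def fermionicExponent (k k₀ k₁ : ℕ) (M : Fin 2 → Fin k → ℕ) : ℤ :=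
  (∑ j : Fin k, ∑ j' : Fin k,
      ((min ((j : ℕ) + 1) ((j' : ℕ) + 1) : ℕ) : ℤ) * (M 0 j : ℤ) * (M 0 j' : ℤ))
  + (∑ j : Fin k, ∑ j' : Fin k,
      max 0 ((((j : ℕ) : ℤ) + 1) + (((j' : ℕ) : ℤ) + 1) - (k : ℤ))
        * (M 0 j : ℤ) * (M 1 j' : ℤ))
  + (∑ j : Fin k, ∑ j' : Fin k,
      ((min ((j : ℕ) + 1) ((j' : ℕ) + 1) : ℕ) : ℤ) * (M 1 j : ℤ) * (M 1 j' : ℤ))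
  + (∑ j : Fin k, max 0 ((((j : ℕ) : ℤ) + 1) - (k₀ : ℤ)) * (M 0 j : ℤ))
  + (∑ j : Fin k, max 0 ((((j : ℕ) : ℤ) + 1) - (k₀ : ℤ) - (k₁ : ℤ)) * (M 1 j : ℤ))

/-!
Let `A τ k₀ k₁ k₂` be the generating function of the configurations for `(k₀, k₁, k₂)` whose
entries are placed at the positions `τ, τ + 1, …`. Configurations with `a 0 < k₀` are those for
`(k₀ - 1, k₁ + 1, k₂)`, and removing the entry `a 0 = k₀` leaves one for `(k₁, k₂, k₀)`. Hence
`A τ k₀ k₁ k₂ = A τ (k₀ - 1) (k₁ + 1) k₂ + x ^ k₀ * A (τ + 1) k₁ k₂ k₀`, where `x` is the weight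
of position `τ`. Together with `A τ 0 k₁ k₂ = A (τ + 1) k₁ k₂ 0` and `A τ k₀ k₁ k₂ ≡ 1` in
degrees below `τ / 2`, this determines `A`.

On the other side, let `F L₁ L₂` be the fermionic sum with arbitrary linear terms. Either some
part of the padded partition of the first color at `c` is zero, and it can be removed, or all its
parts can be lowered. This gives `F L₁ L₂ = F (L₁ + δ_c) L₂ + …`, where the last term changes the
linear terms at all positions. Encode `L₁` by prefix sums and `L₂` by suffix sums of a word of
length `k`. Comparing the relations at two neighboring positions eliminates the nonlocal terms
and leaves relations which change only a few adjacent letters. By telescoping, these local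
relations show that certain combinations of word series, one for each `(k₀, k₁, k₂)`, satisfy the
recursion of the configurations. If `k₀ * k₂ = 0`, the combination is a single word, whose series
is the fermionic character.
-/

namespace FermionicFormula

/-! ### Words and local relations -/

section Words

variable {R : Type*}

/-- A letter `(l, l')` of a word, with one entry for each color. -/
abbrev Letter := ℕ × ℕ

/-- A word, encoding a pair of linear exponents: at `c` the first one is the sum of the first
`c + 1` unprimed entries, the second one is the sum of the last `c + 1` primed entries. -/
abbrev Word := List Letter

/-- Increase the first entry of a letter. -/
def Letter.raiseFst (a : Letter) : Letter := (a.1 + 1, a.2)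

/-- Increase the second entry of a letter. -/
def Letter.raiseSnd (a : Letter) : Letter := (a.1, a.2 + 1)

/-- The symmetry of words exchanging the two linear exponents. -/
def mirror (w : Word) : Word := (w.map Prod.swap).reverse

open Letter

/-- The value of `W` on the word `u.reverse ++ v`: the word is cut into the prefix `u`, read
backwards from the cut, and the suffix `v`. -/
def cut (W : Word → R) (u v : Word) : R := W (u.reverseAux v)

/-- The value of `W` on the cut word whose letter just before the cut is raised in its first
entry; a word with nothing before the cut has value `0`. -/
def cutRaised [Zero R] (W : Word → R) : Word → Word → R
  | [], _ => 0
  | a :: u, v => cut W (a.raiseFst :: u) v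

/-- The shift of functions on words; on configurations it corresponds to removing the first
entry. -/
def wordShift (W : Word → R) : Word → R := W ∘ mirror ∘ List.map raiseSnd

theorem cut_cons (W : Word → R) (a : Letter) (u v : Word) :
    cut W (a :: u) v = cut W u (a :: v) := rfl

@[simp] theorem cut_nil (W : Word → R) (v : Word) : cut W [] v = W v := rfl

theorem cut_comp_cons (W : Word → R) (a : Letter) (u : Word) :
    (fun v ↦ cut W u (a :: v)) = cut W (a :: u) := rfl

@[simp] theorem cutRaised_cons [Zero R] (W : Word → R) (a : Letter) (u v : Word) :
    cutRaised W (a :: u) v = cut W (a.raiseFst :: u) v := rfl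

theorem mirror_mirror (w : Word) : mirror (mirror w) = w := by
  simp [mirror, Function.comp_def]

theorem mirror_map_raiseSnd (w : Word) :
    mirror (w.map raiseSnd) = (mirror w).map raiseFst := by
  simp [mirror, raiseFst, raiseSnd, Function.comp_def]

theorem wordShift_comp_mirror (W : Word → R) : wordShift W ∘ mirror = W ∘ List.map raiseFst := by
  funext w
  simp [wordShift, mirror_map_raiseSnd, mirror_mirror]

theorem wordShift_wordShift (W : Word → R) :
    wordShift (wordShift W) = W ∘ List.map raiseFst ∘ List.map raiseSnd := by
  rw [← Function.comp_assoc, ← wordShift_comp_mirror]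
  rfl

theorem cut_comp_map (W : Word → R) (f : Letter → Letter) (u v : Word) :
    cut (W ∘ List.map f) u v = cut W (u.map f) (v.map f) := by
  simp [cut]

theorem cut_comp_mirror (W : Word → R) (u v : Word) :
    cut (W ∘ mirror) u v = cut W (v.map Prod.swap) (u.map Prod.swap) := by
  simp [cut, mirror]

theorem cut_wordShift (W : Word → R) (u v : Word) :
    cut (wordShift W) u v =
      cut W (v.map fun a ↦ (a.2 + 1, a.1)) (u.map fun a ↦ (a.2 + 1, a.1)) := by
  rw [wordShift, ← Function.comp_assoc, cut_comp_map, cut_comp_mirror]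
  simp [raiseSnd, Function.comp_def]

theorem cutRaised_comp_map [Zero R] (W : Word → R) {f : Letter → Letter}
    (hf : ∀ a, f (raiseFst a) = raiseFst (f a)) (u v : Word) :
    cutRaised (W ∘ List.map f) u v = cutRaised W (u.map f) (v.map f) := by
  cases u <;> simp [cutRaised, cut_comp_map, hf]

theorem map_modifyHead_raiseFst {f : Letter → Letter}
    (hf : ∀ a, f (raiseFst a) = raiseFst (f a)) (v : Word) :
    (v.modifyHead raiseFst).map f = (v.map f).modifyHead raiseFst := by
  cases v <;> simp [hf]

/-- The counterpart of `cutRaised` for the second entry of the letter just after the cut. -/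
def cutRaisedSnd [Zero R] (W : Word → R) (u v : Word) : R :=
  cutRaised (W ∘ mirror) (v.map Prod.swap) (u.map Prod.swap)

@[simp] theorem cutRaisedSnd_cons [Zero R] (W : Word → R) (u : Word) (b b' : ℕ) (v : Word) :
    cutRaisedSnd W u ((b, b') :: v) = cut W u ((b, b' + 1) :: v) := by
  rw [cutRaisedSnd, List.map_cons, cutRaised, cut_comp_mirror]
  simp [raiseFst]

@[simp] theorem cutRaisedSnd_nil [Zero R] (W : Word → R) (u : Word) :
    cutRaisedSnd W u [] = 0 := rfl

end Words

section LocalRelations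

open Letter Finset.HasAntidiagonal

variable {R : Type*} [CommRing R]

/-- The local relation at the first entry of a letter. In the fermionic series it arises by
eliminating a nonlocal term between the positions of two consecutive letters. -/
def FstRelation (W : Word → R) (x q : R) : Prop :=
  ∀ (u : Word) (l l' : ℕ) (v : Word),
    cut W u ((l, l') :: v.modifyHead raiseFst) - cut W u ((l + 1, l') :: v) =
      x * q ^ l * (cut W u ((l + 2, l' + 1) :: v.modifyHead raiseFst) -
        cutRaised W u ((l + 1, l' + 1) :: v.modifyHead raiseFst))

/-- The local relations at both entries of a letter. -/
structure LocalRelations (W : Word → R) (x y q : R) : Prop where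
  fst : FstRelation W x q
  snd : FstRelation (W ∘ mirror) y q

theorem FstRelation.comp_map_raiseFst {W : Word → R} {x q : R} (h : FstRelation W x q) :
    FstRelation (W ∘ List.map raiseFst) (x * q) q := by
  intro u l l' v
  have key := h (u.map raiseFst) (l + 1) l' (v.map raiseFst)
  rw [← map_modifyHead_raiseFst (f := raiseFst) fun _ ↦ rfl] at key
  simp only [cut_comp_map, cutRaised_comp_map W fun _ ↦ rfl, List.map_cons]
  simp only [raiseFst] at key ⊢
  rw [key, pow_succ']
  ring

theorem FstRelation.comp_map_raiseSnd {W : Word → R} {x q : R} (h : FstRelation W x q) :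
    FstRelation (W ∘ List.map raiseSnd) x q := by
  intro u l l' v
  have key := h (u.map raiseSnd) l (l' + 1) (v.map raiseSnd)
  rw [← map_modifyHead_raiseFst (f := raiseSnd) fun _ ↦ rfl] at key
  rw [cut_comp_map, cut_comp_map, cut_comp_map, cutRaised_comp_map W (f := raiseSnd) fun _ ↦ rfl]
  exact key

theorem LocalRelations.shift {W : Word → R} {x y q : R} (h : LocalRelations W x y q) :
    LocalRelations (wordShift W) y (x * q) q where
  fst := h.snd.comp_map_raiseSnd
  snd := by simpa only [wordShift_comp_mirror] using h.fst.comp_map_raiseFst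

theorem LocalRelations.cut_sub_cut_snd {W : Word → R} {x y q : R} (h : LocalRelations W x y q)
    (a a' : ℕ) (u v : Word) :
    cut W ((1, 0) :: (a, a' + 1) :: u) v - cut W ((1, 1) :: (a, a') :: u) v =
      y * (cut W ((2, 2) :: (a, a' + 1) :: u) v -
        cutRaisedSnd W ((2, 1) :: (a, a' + 1) :: u) v) := by
  simpa [cut_comp_mirror, raiseFst, cutRaisedSnd] using
    h.snd (v.map Prod.swap) 0 1 ((a', a) :: u.map Prod.swap)

/-! ### Ladder sums -/

/-- The word with `n` letters `(2, 2)` followed by `e` letters `(2, 1)`. -/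
def ladderTail (n e : ℕ) : Word :=
  List.replicate n (2, 2) ++ List.replicate e (2, 1)

/-- The sum of the values on the words `(1, 0) ^ i (2, 1) (2, 2) ^ j (2, 1) ^ (e - 1)` with
`i + j = n`, weighted by `y ^ j`. For `e = 0` only the word `(1, 0) ^ n` remains. -/
def ladderSum (y : R) : ℕ → ℕ → (Word → R) →ₗ[R] R
  | 0, n => LinearMap.proj (List.replicate n (1, 0))
  | e + 1, n => ∑ p ∈ antidiagonal n,
      y ^ p.2 • LinearMap.proj (List.replicate p.1 (1, 0) ++ (2, 1) :: ladderTail p.2 e)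

theorem ladderSum_zero_apply (y : R) (n : ℕ) (g : Word → R) :
    ladderSum y 0 n g = g (List.replicate n (1, 0)) := rfl

theorem ladderSum_succ_apply (y : R) (e n : ℕ) (g : Word → R) :
    ladderSum y (e + 1) n g = ∑ p ∈ antidiagonal n,
      y ^ p.2 * g (List.replicate p.1 (1, 0) ++ (2, 1) :: ladderTail p.2 e) := by
  simp [ladderSum]

theorem ladderSum_length_zero (y : R) (e : ℕ) (g : Word → R) :
    ladderSum y e 0 g = g (List.replicate e (2, 1)) := by
  cases e <;> simp [ladderSum, ladderTail, List.replicate_succ]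

theorem ladderSum_zero_length_succ (y : R) (n : ℕ) (g : Word → R) :
    ladderSum y 0 (n + 1) g = ladderSum y 0 n (fun v ↦ g ((1, 0) :: v)) := rfl

theorem ladderSum_succ_length_succ (y : R) (e n : ℕ) (g : Word → R) :
    ladderSum y (e + 1) (n + 1) g =
      ladderSum y (e + 1) n (fun v ↦ g ((1, 0) :: v)) +
        y ^ (n + 1) * g ((2, 1) :: ladderTail (n + 1) e) := by
  simp [ladderSum_succ_apply, Finset.Nat.sum_antidiagonal_succ, List.replicate_succ, add_comm]

theorem ladderSum_congr_sub (y : R) (e n : ℕ) {g₁ g₂ g₃ g₄ : Word → R} {c : R}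
    (h : ∀ v, g₁ v - g₂ v = c * (g₃ v - g₄ v)) :
    ladderSum y e n g₁ - ladderSum y e n g₂ =
      c * (ladderSum y e n g₃ - ladderSum y e n g₄) := by
  rw [← map_sub, ← map_sub, ← smul_eq_mul, ← map_smul]
  exact congrArg _ (funext h)

variable {W : Word → R} {x y q : R}

theorem ladderSum_cut_length_one (W : Word → R) (y : R) (e : ℕ) (u : Word) :
    ladderSum y e 1 (cut W u) =
      ladderSum y e 0 (cut W ((1, 0) :: u)) +
        y * ladderSum y e 0 (cutRaisedSnd W ((2, 1) :: u)) := by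
  cases e with
  | zero => simp [ladderSum_zero_apply, cut_cons]
  | succ e =>
    simp [ladderSum_succ_length_succ, ladderSum_length_zero, List.replicate_succ, ladderTail,
      cut_cons]

theorem ladderSum_cut_length_add_two (W : Word → R) (y : R) (e n : ℕ) (u : Word) :
    ladderSum y e (n + 2) (cut W u) =
      ladderSum y e (n + 1) (cut W ((1, 0) :: u)) +
        y * (ladderSum y e (n + 1) (cutRaisedSnd W ((2, 1) :: u)) -
          ladderSum y e n (cut W ((1, 1) :: (2, 1) :: u))) := by
  cases e with
  | zero => simp [ladderSum_zero_apply, cut_cons, List.replicate_succ]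
  | succ e =>
    simp only [ladderSum_succ_length_succ, cutRaisedSnd_cons, cut_comp_cons]
    simp only [cut_cons, ladderTail, List.replicate_succ, List.cons_append]
    ring

theorem LocalRelations.ladderSum_sub_ladderSum (h : LocalRelations W x y q) (e n a a' : ℕ)
    (u : Word) :
    ladderSum y e (n + 1) (cut W ((a, a' + 1) :: u)) -
        ladderSum y e n (cut W ((1, 1) :: (a, a') :: u)) =
      y ^ (n + 1) * cut W ((a, a' + 1) :: u) (ladderTail (n + 1) e) := by
  have cut_tail (n : ℕ) (u : Word) :
      cut W u (ladderTail (n + 1) e) = cut W ((2, 2) :: u) (ladderTail n e) := rfl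
  induction n generalizing a a' u with
  | zero =>
    have rel := ladderSum_congr_sub y e 0 fun v ↦ h.cut_sub_cut_snd a a' u v
    rw [ladderSum_length_zero y e (cut W ((2, 2) :: _))] at rel
    rw [ladderSum_cut_length_one, cut_tail]
    simp only [ladderTail, List.replicate_zero, List.nil_append]
    linear_combination rel
  | succ n ih =>
    have rel := ladderSum_congr_sub y e (n + 1) fun v ↦ h.cut_sub_cut_snd a a' u v
    rw [ladderSum_cut_length_add_two, cut_tail]
    linear_combination rel + y * ih 2 1 ((a, a' + 1) :: u)

/-- The difference of two ladder sums after the prefix `u` which measures the failure of a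
letter `(0, 0)` in front of the cut to commute with the ladder. -/
def ladderDefect (W : Word → R) (y : R) (e n : ℕ) (u : Word) : R :=
  ladderSum y (e + 1) n (cut W u) - ladderSum y e n (fun v ↦ cutRaised W u ((1, 1) :: v))

theorem ladderDefect_nil (W : Word → R) (y : R) (e n : ℕ) :
    ladderDefect W y e n [] = ladderSum y (e + 1) n (cut W []) := by
  exact (congrArg _ (map_zero (ladderSum y e n))).trans (sub_zero _)

theorem FstRelation.cut_sub_cut (h : FstRelation W x q) (u : Word) (a a' : ℕ) (v : Word) :
    cut W ((0, 0) :: u) ((a + 1, a') :: v) - cut W ((1, 0) :: u) ((a, a') :: v) =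
      x * (cut W ((2, 1) :: u) ((a + 1, a') :: v) -
        cutRaised W u ((1, 1) :: (a + 1, a') :: v)) := by
  simpa [cut_cons, raiseFst] using h u 0 0 ((a, a') :: v)

theorem LocalRelations.ladderSum_zero_sub (h : LocalRelations W x y q) (n : ℕ) (u : Word) :
    ladderSum y 0 n (cut W ((0, 0) :: u)) - ladderSum y 0 n (cut W ((1, 0) :: u)) =
      x * ladderDefect W y 0 n u := by
  induction n generalizing u with
  | zero =>
    simpa [ladderDefect, ladderSum_length_zero, cut_cons] using h.fst u 0 0 []
  | succ n ih =>
    have rel := ladderSum_congr_sub y 0 n fun v ↦ h.fst.cut_sub_cut u 0 0 v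
    have step := ih ((1, 0) :: u)
    have tel := h.ladderSum_sub_ladderSum 0 n 2 0 u
    simp only [ladderDefect, ladderSum_zero_length_succ, ladderSum_succ_length_succ, zero_add,
      cut_comp_cons, cutRaised_cons, raiseFst] at rel step tel ⊢
    simp only [cut_cons] at tel
    linear_combination rel + step + x * tel

theorem LocalRelations.ladderDefect_zero_cons (h : LocalRelations W x y q) (e n : ℕ)
    (u : Word) :
    ladderDefect W y e n ((0, 0) :: u) = x * ladderDefect W y (e + 1) n u := by
  induction n generalizing u with
  | zero =>
    simpa [ladderDefect, ladderSum_length_zero, List.replicate_succ, cut_cons, raiseFst]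
      using h.fst.cut_sub_cut u 1 1 (List.replicate e (2, 1))
  | succ n ih =>
    have rel := ladderSum_congr_sub y (e + 1) n fun v ↦ h.fst.cut_sub_cut u 0 0 v
    have rel_tail := h.fst.cut_sub_cut u 1 1 (ladderTail (n + 1) e)
    have step := ih ((1, 0) :: u)
    have tel := h.ladderSum_sub_ladderSum e n 1 0 ((1, 0) :: u)
    have tel_succ := h.ladderSum_sub_ladderSum (e + 1) n 2 0 u
    simp only [ladderDefect, ladderSum_succ_length_succ, zero_add, cut_comp_cons, cutRaised_cons,
      raiseFst, Nat.reduceAdd] at rel rel_tail step tel tel_succ ⊢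
    simp only [cut_cons] at rel_tail tel tel_succ ⊢
    linear_combination rel + step + x * tel_succ + y ^ (n + 1) * rel_tail - tel

theorem LocalRelations.ladderDefect_replicate (h : LocalRelations W x y q) (a e n : ℕ)
    (u : Word) :
    ladderDefect W y e n (List.replicate a (0, 0) ++ u) = x ^ a * ladderDefect W y (e + a) n u := by
  induction a generalizing e with
  | zero => simp
  | succ a ih =>
    rw [List.replicate_succ, List.cons_append, h.ladderDefect_zero_cons, ih, ← add_assoc,
      add_right_comm, pow_succ', mul_assoc]

theorem LocalRelations.cut_replicate_succ_sub (h : LocalRelations W x y q) (a n : ℕ)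
    (u : Word) :
    cut W (List.replicate (a + 1) (0, 0) ++ u) (List.replicate n (1, 0)) -
        cut W (List.replicate a (0, 0) ++ u) (List.replicate (n + 1) (1, 0)) =
      x ^ (a + 1) * ladderDefect W y a n u := by
  have key := h.ladderSum_zero_sub n (List.replicate a (0, 0) ++ u)
  rwa [h.ladderDefect_replicate, zero_add, ← mul_assoc, ← pow_succ'] at key

/-! ### Boundary functions -/

/-- The prefix `(1, 1) ^ m (2, 1) ^ j (1, 1)`, read backwards. -/
def boundaryPrefix (j m : ℕ) : Word :=
  (1, 1) :: (List.replicate j (2, 1) ++ List.replicate m (1, 1))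

/-- The combination of values of `W` attached to the boundary condition `(k₀, k₁, k₂)`: the sum
of the values on `(1, 1) ^ (k₂ - 1) (2, 1) ^ j (1, 1) (0, 0) ^ i (1, 0) ^ k₁` with `i + j = k₀`,
weighted by `x ^ j`, or the value on `(0, 0) ^ k₀ (1, 0) ^ k₁` if `k₂ = 0`. -/
def boundary (W : Word → R) (x : R) (k₀ k₁ : ℕ) : ℕ → R
  | 0 => W (List.replicate k₀ (0, 0) ++ List.replicate k₁ (1, 0))
  | m + 1 => ∑ p ∈ antidiagonal k₀,
      x ^ p.2 * cut W (List.replicate p.1 (0, 0) ++ boundaryPrefix p.2 m) (List.replicate k₁ (1, 0))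

theorem boundary_wordShift (W : Word → R) (y : R) (k₀ k₁ k₂ : ℕ) :
    boundary (wordShift W) y k₁ k₂ k₀ = ladderSum y k₀ k₁ (cut W (List.replicate k₂ (1, 1))) := by
  cases k₀ with
  | zero =>
    have := cut_wordShift W (List.replicate k₁ (0, 0)) (List.replicate k₂ (1, 0))
    simpa [boundary, ladderSum_zero_apply, cut] using this
  | succ m => simp [boundary, ladderSum_succ_apply, cut_wordShift, boundaryPrefix, ladderTail]

theorem boundary_zero (W : Word → R) (x y : R) (k₁ k₂ : ℕ) :
    boundary W x 0 k₁ k₂ = boundary (wordShift W) y k₁ k₂ 0 := by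
  rw [boundary_wordShift, ladderSum_zero_apply]
  cases k₂ <;> simp [boundary, boundaryPrefix, List.replicate_succ, cut_nil]

theorem ladderDefect_boundaryPrefix (W : Word → R) (y : R) (a n j m : ℕ) :
    ladderDefect W y a n (boundaryPrefix j m) =
      ladderSum y (a + 1) n (cut W (boundaryPrefix j m)) -
        ladderSum y a n (cut W (boundaryPrefix (j + 1) m)) :=
  rfl

theorem LocalRelations.boundary_succ (h : LocalRelations W x y q) (k₀ k₁ k₂ : ℕ) :
    boundary W x (k₀ + 1) k₁ k₂ =
      boundary W x k₀ (k₁ + 1) k₂ + x ^ (k₀ + 1) * boundary (wordShift W) y k₁ k₂ (k₀ + 1) := by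
  rw [boundary_wordShift]
  cases k₂ with
  | zero =>
    have key := h.cut_replicate_succ_sub k₀ k₁ []
    rw [ladderDefect_nil] at key
    rw [boundary, boundary, ← sub_eq_iff_eq_add']
    simpa [cut] using key
  | succ m =>
    let G (p : ℕ × ℕ) : R := ladderSum y p.1 k₁ (cut W (boundaryPrefix p.2 m))
    have step : ∀ p ∈ antidiagonal k₀,
        x ^ p.2 * cut W (List.replicate (p.1 + 1) (0, 0) ++ boundaryPrefix p.2 m)
            (List.replicate k₁ (1, 0)) =
          x ^ p.2 * cut W (List.replicate p.1 (0, 0) ++ boundaryPrefix p.2 m)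
            (List.replicate (k₁ + 1) (1, 0)) +
          x ^ (k₀ + 1) * (G (p.1 + 1, p.2) - G (p.1, p.2 + 1)) := by
      rintro ⟨i, j⟩ hp
      have key := h.cut_replicate_succ_sub i k₁ (boundaryPrefix j m)
      rw [ladderDefect_boundaryPrefix] at key
      rw [← Finset.HasAntidiagonal.mem_antidiagonal.1 hp]
      linear_combination x ^ j * key
    have telescope : G (0, k₀ + 1) + ∑ p ∈ antidiagonal k₀, G (p.1 + 1, p.2) =
        G (k₀ + 1, 0) + ∑ p ∈ antidiagonal k₀, G (p.1, p.2 + 1) :=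
      (Finset.Nat.sum_antidiagonal_succ (f := G)).symm.trans Finset.Nat.sum_antidiagonal_succ'
    have first : G (0, k₀ + 1) = cut W (boundaryPrefix (k₀ + 1) m) (List.replicate k₁ (1, 0)) :=
      ladderSum_zero_apply ..
    have last : G (k₀ + 1, 0) = ladderSum y (k₀ + 1) k₁ (cut W (List.replicate (m + 1) (1, 1))) :=
      rfl
    simp only [boundary, Finset.Nat.sum_antidiagonal_succ]
    rw [Finset.sum_congr rfl step, Finset.sum_add_distrib, ← Finset.mul_sum,
      Finset.sum_sub_distrib, List.replicate_zero, List.nil_append, ← first, ← last]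
    linear_combination x ^ (k₀ + 1) * telescope

end LocalRelations

/-! ### Weight enumerators -/

section Enumerator

variable {α β σ : Type*}

/-- The generating function of the elements of `S` with respect to the weight `w`. It is
meaningful when every weight occurs finitely often, since infinite sets have `ncard` zero. -/
noncomputable def enumerator (S : Set α) (w : α → σ →₀ ℕ) : MvPowerSeries σ ℤ :=
  fun n ↦ ({a ∈ S | w a = n}.ncard : ℤ)

theorem coeff_enumerator (S : Set α) (w : α → σ →₀ ℕ) (n : σ →₀ ℕ) :
    MvPowerSeries.coeff n (enumerator S w) = ({a ∈ S | w a = n}.ncard : ℤ) := rfl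

theorem enumerator_union {S T : Set α} {w : α → σ →₀ ℕ} (hST : Disjoint S T)
    (hfin : ∀ n, {a ∈ S ∪ T | w a = n}.Finite) :
    enumerator (S ∪ T) w = enumerator S w + enumerator T w := by
  ext n
  have hS : {a ∈ S | w a = n}.Finite := (hfin n).subset fun a ha ↦ ⟨Or.inl ha.1, ha.2⟩
  have hT : {a ∈ T | w a = n}.Finite := (hfin n).subset fun a ha ↦ ⟨Or.inr ha.1, ha.2⟩
  have hdisj : Disjoint {a ∈ S | w a = n} {a ∈ T | w a = n} :=
    hST.mono (Set.sep_subset _ _) (Set.sep_subset _ _)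
  rw [map_add, coeff_enumerator, coeff_enumerator, coeff_enumerator, ← Nat.cast_add,
    ← Set.ncard_union_eq hdisj hS hT, ← Set.ofPred_or]
  simp only [Set.mem_union, or_and_right]

theorem enumerator_image {f : β → α} (hf : Function.Injective f) (S : Set β) (w : α → σ →₀ ℕ) :
    enumerator (f '' S) w = enumerator S (w ∘ f) := by
  ext n
  have : {a ∈ f '' S | w a = n} = f '' {b ∈ S | w (f b) = n} := by
    ext a
    constructor
    · rintro ⟨⟨b, hb, rfl⟩, hw⟩
      exact ⟨b, ⟨hb, hw⟩, rfl⟩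
    · rintro ⟨b, ⟨hb, hw⟩, rfl⟩
      exact ⟨⟨b, hb, rfl⟩, hw⟩
  rw [coeff_enumerator, coeff_enumerator, this, Set.ncard_image_of_injective _ hf]
  rfl

theorem enumerator_add_weight (S : Set α) (m : σ →₀ ℕ) (w : α → σ →₀ ℕ) :
    enumerator S (fun a ↦ m + w a) = MvPowerSeries.monomial m 1 * enumerator S w := by
  ext n
  simp only [MvPowerSeries.coeff_monomial_mul, coeff_enumerator, one_mul]
  split_ifs with hmn
  · have (a : α) : m + w a = n ↔ w a = n - m :=
      ⟨fun h ↦ by rw [← h, add_tsub_cancel_left], fun h ↦ by rw [h, add_tsub_cancel_of_le hmn]⟩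
    simp only [this]
  · have : {a ∈ S | m + w a = n} = ∅ :=
      Set.eq_empty_of_forall_notMem fun a ha ↦ hmn (ha.2 ▸ le_self_add)
    simp [this]

theorem coeff_enumerator_eq_coeff_one {S : Set α} {w : α → σ →₀ ℕ} {a₀ : α} (ha₀ : a₀ ∈ S)
    (hw₀ : w a₀ = 0) {n : σ →₀ ℕ} (hn : ∀ a ∈ S, w a = n → a = a₀) :
    MvPowerSeries.coeff n (enumerator S w) = MvPowerSeries.coeff n 1 := by
  classical
  rw [coeff_enumerator, MvPowerSeries.coeff_one]
  split_ifs with h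
  · have : {a ∈ S | w a = n} = {a₀} :=
      Set.eq_singleton_iff_unique_mem.2 ⟨⟨ha₀, hw₀.trans h.symm⟩, fun a ha ↦ hn a ha.1 ha.2⟩
    simp [this]
  · have : {a ∈ S | w a = n} = ∅ := Set.eq_empty_of_forall_notMem fun a ha ↦
      h <| by rw [← ha.2, hn a ha.1 ha.2, hw₀]
    simp [this]

end Enumerator

/-! ### Fermionic series -/

section ModifyAt

variable {ι β : Type*} [DecidableEq ι]

/-- Apply `f` to the component of `P` at `i`. -/
def modifyAt (i : ι) (f : β → β) (P : ι → β) : ι → β := Function.update P i (f (P i))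

@[simp] theorem modifyAt_self (i : ι) (f : β → β) (P : ι → β) : modifyAt i f P i = f (P i) :=
  Function.update_self ..

theorem modifyAt_of_ne {i j : ι} (h : j ≠ i) (f : β → β) (P : ι → β) :
    modifyAt i f P j = P j :=
  Function.update_of_ne h ..

theorem modifyAt_injective (i : ι) {f : β → β} (hf : Function.Injective f) :
    Function.Injective (modifyAt i f) := by
  intro P Q h
  funext j
  have hj := congrFun h j
  by_cases hji : j = i
  · subst hji
    exact hf (by simpa using hj)
  · simpa [modifyAt_of_ne hji] using hj

theorem mem_range_modifyAt {i : ι} {f : β → β} {P : ι → β} :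
    P ∈ Set.range (modifyAt i f) ↔ P i ∈ Set.range f := by
  constructor
  · rintro ⟨Q, rfl⟩
    exact ⟨Q i, (modifyAt_self i f Q).symm⟩
  · rintro ⟨b, hb⟩
    exact ⟨Function.update P i b, by simp [modifyAt, hb]⟩

theorem sum_modifyAt [Fintype ι] (i : ι) (f : β → β) (P : ι → β) (φ : β → ℕ) {d : ℕ}
    (h : φ (f (P i)) = φ (P i) + d) :
    ∑ j, φ (modifyAt i f P j) = ∑ j, φ (P j) + d := by
  have (j : ι) : φ (modifyAt i f P j) = φ (P j) + if j = i then d else 0 := by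
    split_ifs with hj
    · rw [hj, modifyAt_self, h]
    · rw [modifyAt_of_ne hj, add_zero]
  simp [this, Finset.sum_add_distrib]

end ModifyAt

section Fermionic

variable {k : ℕ}

/-- The charge of a system of quasi-particles of one color, with `M j` quasi-particles of
charge `j + 1`. -/
def charge (M : Fin k → ℕ) : ℕ := ∑ j : Fin k, ((j : ℕ) + 1) * M j

/-- The interaction of quasi-particles of the same color. -/
def sameColorForm (M : Fin k → ℕ) : ℕ :=
  ∑ i : Fin k, ∑ j : Fin k, min ((i : ℕ) + 1) ((j : ℕ) + 1) * M i * M j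

/-- The interaction of quasi-particles of different colors. -/
def crossColorForm (M N : Fin k → ℕ) : ℕ :=
  ∑ i : Fin k, ∑ j : Fin k, ((i : ℕ) + 1 + ((j : ℕ) + 1) - k) * M i * N j

/-- The linear form with coefficients `L`. -/
def linearForm (L : ℕ → ℕ) (M : Fin k → ℕ) : ℕ := ∑ j : Fin k, L j * M j

/-- The exponent of the fermionic formula with linear terms `L₁` and `L₂`. -/
def exponent (L₁ L₂ : ℕ → ℕ) (M : Fin 2 → Fin k → ℕ) : ℕ :=
  sameColorForm (M 0) + crossColorForm (M 0) (M 1) + sameColorForm (M 1) + linearForm L₁ (M 0) +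
    linearForm L₂ (M 1)

/-- Tuples of padded partitions. A partition with at most `m` parts is encoded by the multiset
of exactly `m` natural numbers obtained by adding parts equal to zero. -/
abbrev PaddedPartitions (k : ℕ) := Fin 2 → Fin k → Multiset ℕ

/-- The numbers of parts, zeros included. -/
def content (P : PaddedPartitions k) (i : Fin 2) (j : Fin k) : ℕ := Multiset.card (P i j)

/-- The sum of all parts. -/
def size (P : PaddedPartitions k) : ℕ := ∑ i, ∑ j, (P i j).sum

/-- The exponents of the two charge variables `x₁`, `x₂` and of the degree variable `2`. -/
noncomputable def fermionicWeight (x₁ x₂ : Fin 3) (L₁ L₂ : ℕ → ℕ) (P : PaddedPartitions k) :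
    Fin 3 →₀ ℕ :=
  Finsupp.single x₁ (charge (content P 0)) + Finsupp.single x₂ (charge (content P 1)) +
    Finsupp.single 2 (size P + exponent L₁ L₂ (content P))

/-- The fermionic character with linear terms `L₁` and `L₂`. -/
noncomputable def fermionicSeries (k : ℕ) (x₁ x₂ : Fin 3) (L₁ L₂ : ℕ → ℕ) :
    MvPowerSeries (Fin 3) ℤ :=
  enumerator Set.univ (fermionicWeight (k := k) x₁ x₂ L₁ L₂)

theorem crossColorForm_comm (M N : Fin k → ℕ) : crossColorForm M N = crossColorForm N M := by
  unfold crossColorForm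
  rw [Finset.sum_comm]
  refine Finset.sum_congr rfl fun i _ ↦ Finset.sum_congr rfl fun j _ ↦ ?_
  rw [add_comm ((j : ℕ) + 1), mul_right_comm]

theorem linearForm_congr {L L' : ℕ → ℕ} (h : ∀ c < k, L c = L' c) (M : Fin k → ℕ) :
    linearForm L M = linearForm L' M :=
  Finset.sum_congr rfl fun j _ ↦ by rw [h j j.2]

theorem charge_add_single (M : Fin k → ℕ) (c : Fin k) :
    charge (M + Pi.single c 1) = charge M + (c + 1) := by
  simp [charge, mul_add, Finset.sum_add_distrib, Pi.single_apply]

theorem linearForm_add_single (L : ℕ → ℕ) (M : Fin k → ℕ) (c : Fin k) :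
    linearForm L (M + Pi.single c 1) = linearForm L M + L c := by
  simp [linearForm, mul_add, Finset.sum_add_distrib, Pi.single_apply]

theorem linearForm_add_left (L L' : ℕ → ℕ) (M : Fin k → ℕ) :
    linearForm (L + L') M = linearForm L M + linearForm L' M := by
  simp [linearForm, add_mul, Finset.sum_add_distrib]

theorem linearForm_single (c : Fin k) (M : Fin k → ℕ) :
    linearForm (Pi.single (c : ℕ) 1) M = M c := by
  simp [linearForm, Pi.single_apply, Fin.val_inj]

theorem sameColorForm_add_single (M : Fin k → ℕ) (c : Fin k) :
    sameColorForm (M + Pi.single c 1) =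
      sameColorForm M + linearForm (fun j ↦ 2 * min ((c : ℕ) + 1) (j + 1)) M + (c + 1) := by
  simp only [sameColorForm, linearForm, Pi.add_apply, mul_add, add_mul, Finset.sum_add_distrib,
    Pi.single_apply, mul_ite, mul_one, mul_zero, ite_mul, zero_mul, Finset.sum_ite_eq',
    Finset.mem_univ, if_true, Finset.sum_ite_irrel, Finset.sum_const_zero, mul_assoc,
    min_comm _ ((c : ℕ) + 1), min_self, ← Finset.mul_sum]
  ring

theorem crossColorForm_add_single (M N : Fin k → ℕ) (c : Fin k) :
    crossColorForm (M + Pi.single c 1) N =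
      crossColorForm M N + linearForm (fun j ↦ (c : ℕ) + 1 + (j + 1) - k) N := by
  simp only [crossColorForm, linearForm, Pi.add_apply, mul_add, add_mul, Finset.sum_add_distrib,
    Pi.single_apply, mul_ite, mul_one, mul_zero, ite_mul, zero_mul, Finset.sum_ite_eq',
    Finset.mem_univ, if_true, Finset.sum_ite_irrel, Finset.sum_const_zero]

theorem le_charge (M : Fin k → ℕ) (j : Fin k) : M j ≤ charge M :=
  (Nat.le_mul_of_pos_left _ j.val.succ_pos).trans <|
    Finset.single_le_sum (f := fun j : Fin k ↦ ((j : ℕ) + 1) * M j) (fun _ _ ↦ Nat.zero_le _)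
      (Finset.mem_univ j)

theorem le_size {P : PaddedPartitions k} {i : Fin 2} {j : Fin k} {a : ℕ} (h : a ∈ P i j) :
    a ≤ size P :=
  calc
    a ≤ (P i j).sum := Multiset.le_sum_of_mem h
    _ ≤ ∑ j, (P i j).sum :=
      Finset.single_le_sum (f := fun j ↦ (P i j).sum) (fun _ _ ↦ Nat.zero_le _)
        (Finset.mem_univ j)
    _ ≤ size P :=
      Finset.single_le_sum (f := fun i ↦ ∑ j, (P i j).sum) (fun _ _ ↦ Nat.zero_le _)
        (Finset.mem_univ i)

theorem multiset_le_nsmul_range {s : Multiset ℕ} {m N : ℕ} (hcard : Multiset.card s ≤ m)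
    (hmem : ∀ a ∈ s, a < N) : s ≤ m • Multiset.range N := by
  rw [Multiset.le_iff_count]
  intro a
  by_cases ha : a ∈ s
  · rw [Multiset.count_nsmul, Multiset.count_eq_one_of_mem (Multiset.nodup_range _)
      (Multiset.mem_range.2 (hmem a ha)), mul_one]
    exact (Multiset.count_le_card _ _).trans hcard
  · simp [Multiset.count_eq_zero_of_notMem ha]

theorem charge_content_le_fermionicWeight (x₁ x₂ : Fin 3) (L₁ L₂ : ℕ → ℕ)
    (P : PaddedPartitions k) (i : Fin 2) :
    charge (content P i) ≤
      fermionicWeight x₁ x₂ L₁ L₂ P x₁ + fermionicWeight x₁ x₂ L₁ L₂ P x₂ := by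
  have h0 : charge (content P 0) ≤ fermionicWeight x₁ x₂ L₁ L₂ P x₁ := by
    simp [fermionicWeight, add_assoc]
  have h1 : charge (content P 1) ≤ fermionicWeight x₁ x₂ L₁ L₂ P x₂ := by
    simp only [fermionicWeight, Finsupp.add_apply, Finsupp.single_eq_same]
    omega
  fin_cases i
  · exact h0.trans (Nat.le_add_right _ _)
  · exact h1.trans (Nat.le_add_left _ _)

theorem size_add_exponent_le_fermionicWeight (x₁ x₂ : Fin 3) (L₁ L₂ : ℕ → ℕ)
    (P : PaddedPartitions k) :
    size P + exponent L₁ L₂ (content P) ≤ fermionicWeight x₁ x₂ L₁ L₂ P 2 := by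
  simp [fermionicWeight]

theorem finite_fermionicWeight_eq (x₁ x₂ : Fin 3) (L₁ L₂ : ℕ → ℕ) (n : Fin 3 →₀ ℕ) :
    {P : PaddedPartitions k | fermionicWeight x₁ x₂ L₁ L₂ P = n}.Finite := by
  have hfin : {P : PaddedPartitions k | ∀ i j,
      P i j ∈ Set.Iic ((n x₁ + n x₂) • Multiset.range (n 2 + 1))}.Finite :=
    Set.Finite.pi' fun _ ↦ Set.Finite.pi' fun _ ↦ Set.finite_Iic _
  refine hfin.subset fun P hP i j ↦ multiset_le_nsmul_range ?_ fun a ha ↦ ?_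
  · rw [← Set.mem_ofPred.1 hP]
    exact (le_charge (content P i) j).trans (charge_content_le_fermionicWeight x₁ x₂ L₁ L₂ P i)
  · rw [← Set.mem_ofPred.1 hP]
    exact Nat.lt_succ_of_le <| (le_size ha).trans <|
      (Nat.le_add_right _ _).trans (size_add_exponent_le_fermionicWeight x₁ x₂ L₁ L₂ P)

theorem fermionicSeries_swap (k : ℕ) (x₁ x₂ : Fin 3) (L₁ L₂ : ℕ → ℕ) :
    fermionicSeries k x₁ x₂ L₁ L₂ = fermionicSeries k x₂ x₁ L₂ L₁ := by
  let swapColors (P : PaddedPartitions k) : PaddedPartitions k := P ∘ Fin.rev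
  have hinv : Function.Involutive swapColors := fun P ↦ funext fun i ↦ by simp [swapColors]
  have hweight : fermionicWeight x₂ x₁ L₂ L₁ ∘ swapColors = fermionicWeight x₁ x₂ L₁ L₂ := by
    funext P
    have h0 : content (swapColors P) 0 = content P 1 := rfl
    have h1 : content (swapColors P) 1 = content P 0 := rfl
    have hsize : size (swapColors P) = size P := by
      simp [size, swapColors, Fin.sum_univ_two, add_comm]
    simp only [Function.comp_apply, fermionicWeight, exponent, h0, h1, hsize,
      crossColorForm_comm (content P 1)]
    rw [add_comm (Finsupp.single x₂ _)]
    congr 2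
    ring
  rw [fermionicSeries, fermionicSeries, ← hweight, ← enumerator_image hinv.injective,
    Set.image_univ_of_surjective hinv.surjective]

theorem fermionicSeries_congr (k : ℕ) (x₁ x₂ : Fin 3) {L₁ L₂ L₁' L₂' : ℕ → ℕ}
    (h₁ : ∀ c < k, L₁ c = L₁' c) (h₂ : ∀ c < k, L₂ c = L₂' c) :
    fermionicSeries k x₁ x₂ L₁ L₂ = fermionicSeries k x₁ x₂ L₁' L₂' := by
  unfold fermionicSeries fermionicWeight exponent
  simp only [linearForm_congr h₁, linearForm_congr h₂]

theorem map_succ_injective : Function.Injective (Multiset.map Nat.succ) :=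
  Multiset.map_injective Nat.succ_injective

theorem mem_range_map_succ {s : Multiset ℕ} : s ∈ Set.range (Multiset.map Nat.succ) ↔ 0 ∉ s := by
  constructor
  · rintro ⟨t, rfl⟩
    simp
  · refine fun h ↦ ⟨s.map Nat.pred, ?_⟩
    rw [Multiset.map_map]
    refine (Multiset.map_congr rfl fun a ha ↦ ?_).trans s.map_id
    exact Nat.succ_pred fun h0 ↦ h (h0 ▸ ha)

theorem mem_range_cons_zero {s : Multiset ℕ} : s ∈ Set.range (Multiset.cons 0) ↔ 0 ∈ s := by
  constructor
  · rintro ⟨t, rfl⟩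
    simp
  · exact fun h ↦ ⟨s.erase 0, Multiset.cons_erase h⟩

/-- Add one to every part of the first-color partition at `c`. -/
def raiseParts (c : Fin k) : PaddedPartitions k → PaddedPartitions k :=
  modifyAt 0 (modifyAt c (Multiset.map Nat.succ))

/-- Add a part equal to zero to the first-color partition at `c`. -/
def addZeroPart (c : Fin k) : PaddedPartitions k → PaddedPartitions k :=
  modifyAt 0 (modifyAt c (Multiset.cons 0))

theorem isCompl_range_raiseParts_addZeroPart (c : Fin k) :
    IsCompl (Set.range (raiseParts c)) (Set.range (addZeroPart c)) := by
  have : Set.range (raiseParts c) = (Set.range (addZeroPart c))ᶜ := by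
    ext P
    rw [Set.mem_compl_iff]
    unfold raiseParts addZeroPart
    rw [mem_range_modifyAt, mem_range_modifyAt, mem_range_modifyAt, mem_range_modifyAt,
      mem_range_map_succ, mem_range_cons_zero]
  exact this ▸ isCompl_compl.symm

theorem size_modifyAt (c : Fin k) {f : Multiset ℕ → Multiset ℕ} (P : PaddedPartitions k) {d : ℕ}
    (h : (f (P 0 c)).sum = (P 0 c).sum + d) :
    size (modifyAt 0 (modifyAt c f) P) = size P + d :=
  sum_modifyAt 0 _ P (fun Q ↦ ∑ j, (Q j).sum) (sum_modifyAt c f (P 0) Multiset.sum h)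

theorem content_modifyAt_zero (c : Fin k) {f : Multiset ℕ → Multiset ℕ} (P : PaddedPartitions k)
    {d : ℕ} (h : Multiset.card (f (P 0 c)) = Multiset.card (P 0 c) + d) :
    content (modifyAt 0 (modifyAt c f) P) 0 = content P 0 + Pi.single c d := by
  funext j
  obtain rfl | hj := eq_or_ne j c
  · simp [content, h]
  · simp [content, modifyAt_of_ne hj, hj]

theorem content_modifyAt_one (f : (Fin k → Multiset ℕ) → Fin k → Multiset ℕ)
    (P : PaddedPartitions k) : content (modifyAt 0 f P) 1 = content P 1 :=
  rfl

theorem fermionicWeight_raiseParts (x₁ x₂ : Fin 3) (L₁ L₂ : ℕ → ℕ) (c : Fin k)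
    (P : PaddedPartitions k) :
    fermionicWeight x₁ x₂ L₁ L₂ (raiseParts c P) =
      fermionicWeight x₁ x₂ (L₁ + Pi.single (c : ℕ) 1) L₂ P := by
  have hsize : size (raiseParts c P) = size P + content P 0 c :=
    size_modifyAt c P (by simp [Multiset.sum_map_add, content])
  have h0 : content (raiseParts c P) 0 = content P 0 := by
    rw [raiseParts, content_modifyAt_zero c P (d := 0) (by simp), Pi.single_zero, add_zero]
  have h1 : content (raiseParts c P) 1 = content P 1 := content_modifyAt_one _ P
  simp only [fermionicWeight, exponent, hsize, h0, h1, linearForm_add_left, linearForm_single]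
  congr 2
  ring

theorem fermionicWeight_addZeroPart (x₁ x₂ : Fin 3) (L₁ L₂ : ℕ → ℕ) (c : Fin k)
    (P : PaddedPartitions k) :
    fermionicWeight x₁ x₂ L₁ L₂ (addZeroPart c P) =
      Finsupp.single x₁ ((c : ℕ) + 1) + Finsupp.single 2 ((c : ℕ) + 1 + L₁ c) +
        fermionicWeight x₁ x₂ (L₁ + fun j ↦ 2 * min ((c : ℕ) + 1) (j + 1))
          (L₂ + fun j ↦ (c : ℕ) + 1 + (j + 1) - k) P := by
  have hsize : size (addZeroPart c P) = size P := size_modifyAt c P (d := 0) (by simp)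
  have h0 : content (addZeroPart c P) 0 = content P 0 + Pi.single c 1 :=
    content_modifyAt_zero c P (by simp)
  have h1 : content (addZeroPart c P) 1 = content P 1 := content_modifyAt_one _ P
  simp only [fermionicWeight, exponent, hsize, h0, h1, linearForm_add_left, charge_add_single,
    sameColorForm_add_single, crossColorForm_add_single, linearForm_add_single, Finsupp.single_add]
  abel

/-- Either some part of the first-color partition at `c` is zero, and it can be removed, or all
parts are positive and can be lowered. -/
theorem fermionicSeries_eq_add (x₁ x₂ : Fin 3) (L₁ L₂ : ℕ → ℕ) (c : Fin k) :
    fermionicSeries k x₁ x₂ L₁ L₂ =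
      fermionicSeries k x₁ x₂ (L₁ + Pi.single (c : ℕ) 1) L₂ +
        MvPowerSeries.monomial
            (Finsupp.single x₁ ((c : ℕ) + 1) + Finsupp.single 2 ((c : ℕ) + 1 + L₁ c)) 1 *
          fermionicSeries k x₁ x₂ (L₁ + fun j ↦ 2 * min ((c : ℕ) + 1) (j + 1))
            (L₂ + fun j ↦ (c : ℕ) + 1 + (j + 1) - k) := by
  have hcompl := isCompl_range_raiseParts_addZeroPart c
  have hraise : Function.Injective (raiseParts c) :=
    modifyAt_injective 0 (modifyAt_injective c map_succ_injective)
  have hadd : Function.Injective (addZeroPart c) :=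
    modifyAt_injective 0 (modifyAt_injective c fun s t ↦ (Multiset.cons_inj_right 0).1)
  have hfin (n : Fin 3 →₀ ℕ) :=
    (finite_fermionicWeight_eq x₁ x₂ L₁ L₂ n).subset
      (Set.sep_subset_ofPred (Set.range (raiseParts c) ∪ Set.range (addZeroPart c)) _)
  have hunion : Set.range (raiseParts c) ∪ Set.range (addZeroPart c) = Set.univ :=
    hcompl.sup_eq_top
  rw [fermionicSeries, ← hunion, enumerator_union hcompl.disjoint hfin, ← Set.image_univ,
    ← Set.image_univ, enumerator_image hraise, enumerator_image hadd, fermionicSeries,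
    fermionicSeries, ← enumerator_add_weight]
  simp only [Function.comp_def, fermionicWeight_raiseParts, fermionicWeight_addZeroPart]

end Fermionic

/-! ### Fermionic series of words -/

section PrefixSum

/-- The sum of the first `c + 1` entries of `l`. -/
def prefixSum (l : List ℕ) (c : ℕ) : ℕ := (l.take (c + 1)).sum

theorem sum_take_map_add (d n : ℕ) (l : List ℕ) :
    ((l.map (· + d)).take n).sum = (l.take n).sum + d * min n l.length := by
  rw [← List.map_take, List.sum_map_add, List.map_id', List.map_const', List.sum_replicate,
    List.length_take, smul_eq_mul, mul_comm]

theorem prefixSum_map_add_append (d c : ℕ) (l l' : List ℕ) :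
    prefixSum (l.map (· + d) ++ l') c = prefixSum (l ++ l') c + d * min l.length (c + 1) := by
  simp only [prefixSum, List.take_append, List.sum_append, sum_take_map_add, List.length_map,
    min_comm l.length]
  ring

theorem prefixSum_append_map_succ {l l' : List ℕ} {c : ℕ} (hc : c < l.length + l'.length) :
    prefixSum (l ++ l'.map (· + 1)) c = prefixSum (l ++ l') c + (c + 1 - l.length) := by
  simp only [prefixSum, List.take_append, List.sum_append, sum_take_map_add, one_mul]
  omega

theorem prefixSum_append_succ_cons {l l' : List ℕ} {a c : ℕ}
    (hc : c < l.length + 1 + l'.length) :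
    prefixSum (l ++ (a + 1) :: l') c =
      prefixSum (l ++ a :: l'.modifyHead (· + 1)) c + (Pi.single l.length 1 : ℕ → ℕ) c := by
  simp only [prefixSum, List.take_append, List.sum_append, add_assoc]
  congr 1
  obtain hlt | rfl | hgt := lt_trichotomy c l.length
  · simp [Nat.sub_eq_zero_of_le (Nat.succ_le_of_lt hlt), hlt.ne]
  · simp
  · obtain ⟨m, rfl⟩ := Nat.exists_eq_add_of_lt hgt
    cases l' with
    | nil => simp at hc
    | cons b l' =>
      rw [show l.length + m + 1 + 1 - l.length = m + 2 by omega, Pi.single_eq_of_ne hgt.ne',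
        add_zero]
      simp only [List.take_succ_cons, List.modifyHead_cons, List.sum_cons]
      ring

end PrefixSum

section WordSeries

open Letter MvPowerSeries

/-- The fermionic character whose linear exponents are encoded by the word `w`. -/
noncomputable def wordSeries (x₁ x₂ : Fin 3) (w : Word) : MvPowerSeries (Fin 3) ℤ :=
  fermionicSeries w.length x₁ x₂ (prefixSum (w.map Prod.fst)) (prefixSum (w.reverse.map Prod.snd))

theorem wordSeries_comp_mirror (x₁ x₂ : Fin 3) :
    wordSeries x₁ x₂ ∘ mirror = wordSeries x₂ x₁ := by
  funext w
  simp [wordSeries, mirror, fermionicSeries_swap _ x₁, Function.comp_def]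

/-- The effect on a letter of the linear terms produced by a quasi-particle to its right. -/
def Letter.screen (a : Letter) : Letter := (a.1 + 2, a.2 + 1)

theorem cut_wordSeries (x₁ x₂ : Fin 3) (u v : Word) :
    cut (wordSeries x₁ x₂) u v = fermionicSeries (u.length + v.length) x₁ x₂
      (prefixSum ((u.map Prod.fst).reverse ++ v.map Prod.fst))
      (prefixSum ((v.map Prod.snd).reverse ++ u.map Prod.snd)) := by
  simp [cut, wordSeries]

theorem map_fst_modifyHead_raiseFst (v : Word) :
    (v.modifyHead raiseFst).map Prod.fst = (v.map Prod.fst).modifyHead (· + 1) := by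
  cases v <;> rfl

theorem map_snd_modifyHead_raiseFst (v : Word) :
    (v.modifyHead raiseFst).map Prod.snd = v.map Prod.snd := by
  cases v <;> rfl

theorem cut_wordSeries_map_screen (x₁ x₂ : Fin 3) (u v : Word) :
    cut (wordSeries x₁ x₂) (u.map screen) v = fermionicSeries (u.length + v.length) x₁ x₂
      (prefixSum ((u.map Prod.fst).reverse ++ v.map Prod.fst) +
        fun j ↦ 2 * min u.length (j + 1))
      (prefixSum ((v.map Prod.snd).reverse ++ u.map Prod.snd) +
        fun j ↦ u.length + (j + 1) - (u.length + v.length)) := by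
  have hfst : ((u.map screen).map Prod.fst).reverse = (u.map Prod.fst).reverse.map (· + 2) := by
    simp [screen, Function.comp_def]
  have hsnd : (u.map screen).map Prod.snd = (u.map Prod.snd).map (· + 1) := by
    simp [screen, Function.comp_def]
  rw [cut_wordSeries, hfst, hsnd, List.length_map]
  refine fermionicSeries_congr _ _ _ (fun c _ ↦ ?_) fun c hc ↦ ?_
  · rw [prefixSum_map_add_append]
    simp
  · rw [prefixSum_append_map_succ (by simpa [add_comm] using hc)]
    simp [Nat.add_sub_add_left]

theorem cut_wordSeries_sub_cut (x₁ x₂ : Fin 3) (u : Word) (l l' : ℕ) (v : Word) :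
    cut (wordSeries x₁ x₂) u ((l, l') :: v.modifyHead raiseFst) -
        cut (wordSeries x₁ x₂) u ((l + 1, l') :: v) =
      monomial (Finsupp.single x₁ (u.length + 1) +
          Finsupp.single 2 (u.length + 1 + ((u.map Prod.fst).sum + l))) 1 *
        cut (wordSeries x₁ x₂) (((l, l') :: u).map screen) (v.modifyHead raiseFst) := by
  set L₁ := prefixSum ((u.map Prod.fst).reverse ++ l :: (v.map Prod.fst).modifyHead (· + 1))
    with hL₁
  set L₂ := prefixSum ((l' :: v.map Prod.snd).reverse ++ u.map Prod.snd) with hL₂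
  have hsum : (u.map Prod.fst).sum + l = L₁ u.length := by
    simp [hL₁, prefixSum, List.take_append, List.take_of_length_le]
  have hlower : cut (wordSeries x₁ x₂) u ((l, l') :: v.modifyHead raiseFst) =
      fermionicSeries (u.length + 1 + v.length) x₁ x₂ L₁ L₂ := by
    simp [cut_wordSeries, map_fst_modifyHead_raiseFst, map_snd_modifyHead_raiseFst, hL₁, hL₂,
      add_assoc, add_comm 1]
  have hraise : cut (wordSeries x₁ x₂) u ((l + 1, l') :: v) =
      fermionicSeries (u.length + 1 + v.length) x₁ x₂ (L₁ + Pi.single u.length 1) L₂ := by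
    rw [cut_wordSeries, List.length_cons, ← add_assoc, add_right_comm]
    refine fermionicSeries_congr _ _ _ (fun c hc ↦ ?_) fun _ _ ↦ rfl
    have hc' : c < (u.map Prod.fst).reverse.length + 1 + (v.map Prod.fst).length := by
      simpa only [List.length_reverse, List.length_map] using hc
    simpa [hL₁] using prefixSum_append_succ_cons (a := l) hc'
  have hscreen : cut (wordSeries x₁ x₂) (((l, l') :: u).map screen) (v.modifyHead raiseFst) =
      fermionicSeries (u.length + 1 + v.length) x₁ x₂
        (L₁ + fun j ↦ 2 * min (u.length + 1) (j + 1))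
        (L₂ + fun j ↦ u.length + 1 + (j + 1) - (u.length + 1 + v.length)) := by
    rw [cut_wordSeries_map_screen]
    simp [map_fst_modifyHead_raiseFst, map_snd_modifyHead_raiseFst, hL₁, hL₂]
  rw [hlower, hraise, hscreen, sub_eq_iff_eq_add', hsum]
  exact fermionicSeries_eq_add x₁ x₂ L₁ L₂ ⟨u.length, by omega⟩

theorem fstRelation_wordSeries (x₁ x₂ : Fin 3) :
    FstRelation (wordSeries x₁ x₂) (monomial (Finsupp.single x₁ 1 + Finsupp.single 2 1) 1)
      (monomial (Finsupp.single 2 1) 1) := by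
  intro u l l' v
  rw [cut_wordSeries_sub_cut, monomial_pow, monomial_mul_monomial, one_pow, one_mul]
  cases u with
  | nil => simp [cutRaised, cut, screen, add_assoc, ← Finsupp.single_add]
  | cons a u =>
    have key := cut_wordSeries_sub_cut x₁ x₂ u a.1 a.2 ((l + 1, l' + 1) :: v.modifyHead raiseFst)
    have hexp : Finsupp.single x₁ ((a :: u).length + 1) +
          Finsupp.single 2 ((a :: u).length + 1 + (((a :: u).map Prod.fst).sum + l)) =
        Finsupp.single x₁ 1 + Finsupp.single 2 1 + l • Finsupp.single 2 1 +
          (Finsupp.single x₁ (u.length + 1) +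
            Finsupp.single (2 : Fin 3) (u.length + 1 + ((u.map Prod.fst).sum + a.1))) := by
      simp only [List.length_cons, List.map_cons, List.sum_cons, Finsupp.single_add,
        Finsupp.smul_single, smul_eq_mul, mul_one]
      abel
    rw [hexp, ← one_mul (1 : ℤ), ← monomial_mul_monomial, mul_one, mul_assoc]
    exact congrArg _ key.symm

theorem localRelations_wordSeries :
    LocalRelations (wordSeries 0 1) (monomial (Finsupp.single 0 1 + Finsupp.single 2 1) 1)
      (monomial (Finsupp.single 1 1 + Finsupp.single 2 1) 1) (monomial (Finsupp.single 2 1) 1) where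
  fst := fstRelation_wordSeries 0 1
  snd := by
    rw [wordSeries_comp_mirror]
    exact fstRelation_wordSeries 1 0

end WordSeries

/-! ### Configurations -/

section Configurations

/-- The contribution of a particle at position `r` to the charge (variables `0` and `1`) and to
the degree (variable `2`). -/
noncomputable def siteWeight (r : ℕ) : Fin 3 →₀ ℕ :=
  Finsupp.single (if Even r then 0 else 1) 1 + Finsupp.single 2 (r / 2 + 1)

/-- The weight of a configuration translated by `τ` positions. -/
noncomputable def configWeight (τ : ℕ) (a : ℕ →₀ ℕ) : Fin 3 →₀ ℕ :=
  a.sum fun i v ↦ v • siteWeight (τ + i)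

/-- The admissible configurations of level `k₀ + k₁ + k₂`. -/
def configs (k₀ k₁ k₂ : ℕ) : Set (ℕ →₀ ℕ) := {a | IsAdmissibleConfig (k₀ + k₁ + k₂) k₀ k₁ a}

/-- The generating function of the admissible configurations translated by `τ` positions. -/
noncomputable def configSeries (τ k₀ k₁ k₂ : ℕ) : MvPowerSeries (Fin 3) ℤ :=
  enumerator (configs k₀ k₁ k₂) (configWeight τ)

/-- The configuration with first entry `j` followed by `b`. -/
noncomputable def consConfig (j : ℕ) (b : ℕ →₀ ℕ) : ℕ →₀ ℕ :=
  Finsupp.single 0 j + b.mapDomain Nat.succ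

theorem siteWeight_two (r : ℕ) : siteWeight r 2 = r / 2 + 1 := by
  rw [siteWeight]
  split_ifs <;> simp

theorem siteWeight_add_two (r : ℕ) : siteWeight (r + 2) = siteWeight r + Finsupp.single 2 1 := by
  have hparity : Even (r + 2) ↔ Even r := by simp [Nat.even_add]
  simp only [siteWeight, hparity, add_assoc, ← Finsupp.single_add]
  rw [Nat.add_div_right r two_pos, add_assoc]

theorem mul_le_configWeight_two (τ : ℕ) (a : ℕ →₀ ℕ) (i : ℕ) :
    a i * ((τ + i) / 2 + 1) ≤ configWeight τ a 2 := by
  have h : configWeight τ a 2 = a.sum fun i v ↦ v * ((τ + i) / 2 + 1) := by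
    simp [configWeight, siteWeight_two]
  rw [h]
  by_cases hi : i ∈ a.support
  · exact Finset.single_le_sum (f := fun i ↦ a i * ((τ + i) / 2 + 1)) (fun _ _ ↦ Nat.zero_le _) hi
  · simp [Finsupp.notMem_support_iff.1 hi]

theorem finite_configWeight_eq (τ : ℕ) (n : Fin 3 →₀ ℕ) :
    {a : ℕ →₀ ℕ | configWeight τ a = n}.Finite := by
  let B : ℕ →₀ ℕ := Finsupp.indicator (Finset.range (2 * n 2)) fun _ _ ↦ n 2
  refine (Set.finite_Iic B).subset fun a ha i ↦ ?_
  have hle := mul_le_configWeight_two τ a i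
  rw [Set.mem_ofPred.1 ha] at hle
  by_cases hi : i ∈ Finset.range (2 * n 2)
  · rw [Finsupp.indicator_of_mem hi]
    exact (Nat.le_mul_of_pos_right _ (Nat.succ_pos _)).trans hle
  · rw [Finsupp.indicator_of_notMem hi]
    rw [Finset.mem_range] at hi
    by_contra! hpos
    have := (Nat.le_mul_of_pos_left ((τ + i) / 2 + 1) hpos).trans hle
    omega

@[simp] theorem consConfig_zero (j : ℕ) (b : ℕ →₀ ℕ) : consConfig j b 0 = j := by
  rw [consConfig, Finsupp.add_apply, Finsupp.single_eq_same,
    Finsupp.mapDomain_of_notMem_range _ _ (by simp), add_zero]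

@[simp] theorem consConfig_succ (j : ℕ) (b : ℕ →₀ ℕ) (i : ℕ) :
    consConfig j b (i + 1) = b i := by
  rw [consConfig, Finsupp.add_apply, Finsupp.single_eq_of_ne i.succ_ne_zero, zero_add]
  exact Finsupp.mapDomain_apply Nat.succ_injective b i

theorem consConfig_injective (j : ℕ) : Function.Injective (consConfig j) := fun b b' h ↦
  Finsupp.ext fun i ↦ by simpa using DFunLike.congr_fun h (i + 1)

theorem exists_consConfig_eq (a : ℕ →₀ ℕ) : ∃ b, consConfig (a 0) b = a := by
  refine ⟨a.comapDomain Nat.succ Nat.succ_injective.injOn, Finsupp.ext fun i ↦ ?_⟩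
  cases i <;> simp

theorem configWeight_consConfig (τ j : ℕ) (b : ℕ →₀ ℕ) :
    configWeight τ (consConfig j b) = j • siteWeight τ + configWeight (τ + 1) b := by
  have hadd (i v w : ℕ) :
      (v + w) • siteWeight (τ + i) = v • siteWeight (τ + i) + w • siteWeight (τ + i) :=
    add_smul ..
  unfold configWeight consConfig
  rw [Finsupp.sum_add_index' (by simp) hadd, Finsupp.sum_single_index (by simp),
    Finsupp.sum_mapDomain_index (by simp) hadd]
  simp only [add_zero, Nat.succ_eq_add_one, add_assoc, add_comm 1]

theorem consConfig_mem_configs (k₀ k₁ k₂ : ℕ) (b : ℕ →₀ ℕ) :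
    consConfig k₀ b ∈ configs k₀ k₁ k₂ ↔ b ∈ configs k₁ k₂ k₀ := by
  have hk : k₁ + k₂ + k₀ = k₀ + k₁ + k₂ := by ring
  constructor
  · rintro ⟨hsum, -, hfst⟩
    refine ⟨fun i ↦ ?_, ?_, ?_⟩
    · rw [hk]
      simpa only [consConfig_succ] using hsum (i + 1)
    · simpa using hfst
    · simpa [add_assoc] using hsum 0
  · rintro ⟨hsum, hfst, hsnd⟩
    refine ⟨fun i ↦ ?_, ?_, ?_⟩
    · cases i with
      | zero => simpa [add_assoc] using hsnd
      | succ i => simpa [hk] using hsum i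
    · simp
    · simpa using hfst

theorem image_consConfig_configs (k₀ k₁ k₂ : ℕ) :
    consConfig k₀ '' configs k₁ k₂ k₀ = {a ∈ configs k₀ k₁ k₂ | a 0 = k₀} := by
  ext a
  constructor
  · rintro ⟨b, hb, rfl⟩
    exact ⟨(consConfig_mem_configs k₀ k₁ k₂ b).2 hb, consConfig_zero k₀ b⟩
  · rintro ⟨ha, h0⟩
    obtain ⟨b, hb⟩ := exists_consConfig_eq a
    rw [h0] at hb
    subst hb
    exact ⟨b, (consConfig_mem_configs k₀ k₁ k₂ b).1 ha, rfl⟩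

theorem configs_zero (k₁ k₂ : ℕ) : configs 0 k₁ k₂ = consConfig 0 '' configs k₁ k₂ 0 := by
  rw [image_consConfig_configs, eq_comm, Set.sep_eq_self_iff_mem_true]
  exact fun a ha ↦ Nat.le_zero.1 ha.2.1

theorem configs_succ (k₀ k₁ k₂ : ℕ) :
    configs (k₀ + 1) k₁ k₂ =
      configs k₀ (k₁ + 1) k₂ ∪ consConfig (k₀ + 1) '' configs k₁ k₂ (k₀ + 1) := by
  rw [image_consConfig_configs]
  have hk : k₀ + 1 + k₁ + k₂ = k₀ + (k₁ + 1) + k₂ := by ring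
  ext a
  simp only [configs, IsAdmissibleConfig, Set.mem_union, Set.mem_ofPred, hk]
  grind

theorem enumerator_image_consConfig (τ j : ℕ) (S : Set (ℕ →₀ ℕ)) :
    enumerator (consConfig j '' S) (configWeight τ) =
      MvPowerSeries.monomial (j • siteWeight τ) 1 * enumerator S (configWeight (τ + 1)) := by
  rw [enumerator_image (consConfig_injective j), ← enumerator_add_weight]
  exact congrArg _ (funext fun b ↦ configWeight_consConfig τ j b)

end Configurations

/-! ### Boundary recursion -/

section BoundaryRecursion

/-- The recursion of the configurations with respect to the first entry, where `τ` is the number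
of entries that were already removed. -/
structure BoundaryRecursion (A : ℕ → ℕ → ℕ → ℕ → MvPowerSeries (Fin 3) ℤ) : Prop where
  zero (τ k₁ k₂ : ℕ) : A τ 0 k₁ k₂ = A (τ + 1) k₁ k₂ 0
  succ (τ k₀ k₁ k₂ : ℕ) : A τ (k₀ + 1) k₁ k₂ = A τ k₀ (k₁ + 1) k₂ +
    MvPowerSeries.monomial ((k₀ + 1) • siteWeight τ) 1 * A (τ + 1) k₁ k₂ (k₀ + 1)
  coeff_of_lt (τ k₀ k₁ k₂ : ℕ) {n : Fin 3 →₀ ℕ} (hn : n 2 < τ / 2) :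
    MvPowerSeries.coeff n (A τ k₀ k₁ k₂) = MvPowerSeries.coeff n 1

theorem BoundaryRecursion.unique {A B : ℕ → ℕ → ℕ → ℕ → MvPowerSeries (Fin 3) ℤ}
    (hA : BoundaryRecursion A) (hB : BoundaryRecursion B) : A = B := by
  suffices ∀ m τ k₀ k₁ k₂ (n : Fin 3 →₀ ℕ), 2 * n 2 + 2 ≤ τ + m →
      MvPowerSeries.coeff n (A τ k₀ k₁ k₂) = MvPowerSeries.coeff n (B τ k₀ k₁ k₂) by
    ext τ k₀ k₁ k₂ n
    exact this (2 * n 2 + 2) τ k₀ k₁ k₂ n (Nat.le_add_left _ _)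
  intro m
  induction m with
  | zero =>
    intro τ k₀ k₁ k₂ n hn
    have hlt : n 2 < τ / 2 := by omega
    rw [hA.coeff_of_lt τ k₀ k₁ k₂ hlt, hB.coeff_of_lt τ k₀ k₁ k₂ hlt]
  | succ m ih =>
    intro τ k₀
    induction k₀ with
    | zero =>
      intro k₁ k₂ n hn
      rw [hA.zero, hB.zero, ih (τ + 1) k₁ k₂ 0 n (by omega)]
    | succ k₀ ih_first =>
      intro k₁ k₂ n hn
      rw [hA.succ, hB.succ, map_add, map_add, ih_first (k₁ + 1) k₂ n hn,
        MvPowerSeries.coeff_monomial_mul, MvPowerSeries.coeff_monomial_mul]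
      have hle : (n - (k₀ + 1) • siteWeight τ) 2 ≤ n 2 := tsub_le_self
      rw [ih (τ + 1) k₁ k₂ (k₀ + 1) _ (by omega)]

theorem boundaryRecursion_configSeries : BoundaryRecursion configSeries where
  zero τ k₁ k₂ := by
    rw [configSeries, configs_zero, enumerator_image_consConfig, zero_smul,
      MvPowerSeries.monomial_zero_one, one_mul, configSeries]
  succ τ k₀ k₁ k₂ := by
    have hdisj : Disjoint (configs k₀ (k₁ + 1) k₂)
        (consConfig (k₀ + 1) '' configs k₁ k₂ (k₀ + 1)) := by
      refine Set.disjoint_left.2 fun a ha ha' ↦ ?_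
      obtain ⟨b, -, rfl⟩ := ha'
      exact absurd ha.2.1 (by simp)
    rw [configSeries, configs_succ, enumerator_union hdisj fun n ↦
      (finite_configWeight_eq τ n).subset (Set.sep_subset_ofPred _ _),
      enumerator_image_consConfig, configSeries, configSeries]
  coeff_of_lt τ k₀ k₁ k₂ n hn := by
    refine coeff_enumerator_eq_coeff_one (a₀ := 0) ?_ rfl fun a _ ha ↦ ?_
    · simp [configs, IsAdmissibleConfig]
    · by_contra hne
      obtain ⟨i, hi⟩ := Finsupp.ne_iff.1 hne
      have hle := mul_le_configWeight_two τ a i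
      rw [ha] at hle
      have := (Nat.le_mul_of_pos_left ((τ + i) / 2 + 1) (Nat.pos_of_ne_zero hi)).trans hle
      omega

end BoundaryRecursion

section ShiftedWords

open Letter MvPowerSeries

/-- The words whose entries all are at least `m`. -/
def EntriesGE (m : ℕ) (w : Word) : Prop := ∀ a ∈ w, m ≤ a.1 ∧ m ≤ a.2

theorem le_prefixSum {l : List ℕ} {m c : ℕ} (hl : ∀ a ∈ l, m ≤ a) (hc : c < l.length) :
    m ≤ prefixSum l c := by
  cases l with
  | nil => simp at hc
  | cons a l => exact (hl a List.mem_cons_self).trans (by simp [prefixSum])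

theorem le_linearForm {k m : ℕ} {L : ℕ → ℕ} {M : Fin k → ℕ} (hL : ∀ c < k, m ≤ L c)
    (hM : M ≠ 0) : m ≤ linearForm L M := by
  obtain ⟨j, hj⟩ := Function.ne_iff.1 hM
  calc
    m ≤ L j * M j := (hL j j.2).trans (Nat.le_mul_of_pos_right _ (Nat.pos_of_ne_zero hj))
    _ ≤ linearForm L M :=
      Finset.single_le_sum (f := fun j : Fin k ↦ L j * M j) (fun _ _ ↦ Nat.zero_le _)
        (Finset.mem_univ j)

theorem content_eq_zero {k : ℕ} {P : PaddedPartitions k} : content P = 0 ↔ P = 0 := by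
  simp [funext_iff, content]

theorem fermionicWeight_zero (k : ℕ) (x₁ x₂ : Fin 3) (L₁ L₂ : ℕ → ℕ) :
    fermionicWeight x₁ x₂ L₁ L₂ (0 : PaddedPartitions k) = 0 := by
  have hcontent : content (0 : PaddedPartitions k) = 0 := content_eq_zero.2 rfl
  simp [fermionicWeight, exponent, hcontent, charge, sameColorForm, crossColorForm, linearForm,
    size]

theorem coeff_fermionicSeries_of_lt (k : ℕ) (x₁ x₂ : Fin 3) {L₁ L₂ : ℕ → ℕ} {m : ℕ}
    (h₁ : ∀ c < k, m ≤ L₁ c) (h₂ : ∀ c < k, m ≤ L₂ c) {n : Fin 3 →₀ ℕ} (hn : n 2 < m) :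
    coeff n (fermionicSeries k x₁ x₂ L₁ L₂) = coeff n 1 := by
  refine coeff_enumerator_eq_coeff_one (Set.mem_univ 0) (fermionicWeight_zero k x₁ x₂ L₁ L₂)
    fun P _ hP ↦ ?_
  by_contra hne
  have hexp : exponent L₁ L₂ (content P) ≤ n 2 :=
    (Nat.le_add_left _ _).trans (hP ▸ size_add_exponent_le_fermionicWeight x₁ x₂ L₁ L₂ P)
  unfold exponent at hexp
  obtain h0 | h1 := Fin.exists_fin_two.1 (Function.ne_iff.1 (content_eq_zero.not.2 hne))
  · have := le_linearForm h₁ h0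
    omega
  · have := le_linearForm h₂ h1
    omega

theorem coeff_wordSeries_of_lt (x₁ x₂ : Fin 3) {m : ℕ} {w : Word} (hw : EntriesGE m w)
    {n : Fin 3 →₀ ℕ} (hn : n 2 < m) : coeff n (wordSeries x₁ x₂ w) = coeff n 1 := by
  refine coeff_fermionicSeries_of_lt _ x₁ x₂ (m := m) (fun c hc ↦ ?_) (fun c hc ↦ ?_) hn
  · exact le_prefixSum (by simpa using fun a b h ↦ (hw (a, b) h).1) (by simpa using hc)
  · exact le_prefixSum (by simpa using fun a b h ↦ (hw (b, a) h).2) (by simpa using hc)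

theorem coeff_wordShift_iterate_of_lt (τ : ℕ) {m : ℕ} {w : Word} (hw : EntriesGE m w)
    {n : Fin 3 →₀ ℕ} (hn : n 2 < τ / 2 + m) :
    coeff n (wordShift^[τ] (wordSeries 0 1) w) = coeff n 1 := by
  induction τ using Nat.twoStepInduction generalizing m w with
  | zero => exact coeff_wordSeries_of_lt 0 1 hw (by simpa using hn)
  | one =>
    refine coeff_wordSeries_of_lt 0 1 (m := m) (fun a ha ↦ ?_) (by simpa using hn)
    obtain ⟨b, hb, rfl⟩ : ∃ b ∈ w, (b.2 + 1, b.1) = a := by simpa [mirror, raiseSnd] using ha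
    exact ⟨(hw b hb).2.trans (Nat.le_succ _), (hw b hb).1⟩
  | more τ ih _ =>
    rw [Function.iterate_succ_apply', Function.iterate_succ_apply', wordShift_wordShift]
    refine ih (m := m + 1) (fun a ha ↦ ?_) (by omega)
    obtain ⟨b, hb, rfl⟩ : ∃ b ∈ w, (b.1 + 1, b.2 + 1) = a := by
      simpa [raiseFst, raiseSnd] using ha
    exact ⟨Nat.succ_le_succ (hw b hb).1, Nat.succ_le_succ (hw b hb).2⟩

theorem localRelations_wordShift_iterate (τ : ℕ) :
    LocalRelations (wordShift^[τ] (wordSeries 0 1)) (monomial (siteWeight τ) 1)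
      (monomial (siteWeight (τ + 1)) 1) (monomial (Finsupp.single 2 1) 1) := by
  induction τ with
  | zero => simpa [siteWeight] using localRelations_wordSeries
  | succ τ ih =>
    have h := ih.shift
    rw [monomial_mul_monomial, one_mul, ← siteWeight_add_two] at h
    rwa [Function.iterate_succ_apply']

/-- The boundary functions of the shifted fermionic series. -/
noncomputable def boundarySeries (τ : ℕ) : ℕ → ℕ → ℕ → MvPowerSeries (Fin 3) ℤ :=
  boundary (wordShift^[τ] (wordSeries 0 1)) (monomial (siteWeight τ) 1)

theorem boundaryRecursion_boundarySeries : BoundaryRecursion boundarySeries where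
  zero τ k₁ k₂ := by
    rw [boundarySeries, boundarySeries, Function.iterate_succ_apply']
    exact boundary_zero ..
  succ τ k₀ k₁ k₂ := by
    rw [boundarySeries, boundarySeries, Function.iterate_succ_apply',
      (localRelations_wordShift_iterate τ).boundary_succ, monomial_pow, one_pow]
  coeff_of_lt τ k₀ k₁ k₂ n hn := by
    have hword (w : Word) : coeff n (wordShift^[τ] (wordSeries 0 1) w) = coeff n 1 :=
      coeff_wordShift_iterate_of_lt τ (m := 0) (by simp [EntriesGE]) (by simpa using hn)
    cases k₂ with
    | zero => exact hword _
    | succ m =>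
      rw [boundarySeries, boundary, map_sum, Finset.sum_eq_single (k₀, 0)]
      · rw [pow_zero, one_mul]
        exact hword _
      · rintro ⟨i, j⟩ hij hne
        have hj : j ≠ 0 := by
          rintro rfl
          simp_all
        rw [monomial_pow, coeff_monomial_mul, if_neg]
        intro hle
        have hle_two : j * (τ / 2 + 1) ≤ n 2 := by simpa [siteWeight_two] using hle 2
        have := (Nat.le_mul_of_pos_left (τ / 2 + 1) (Nat.pos_of_ne_zero hj)).trans hle_two
        omega
      · simp

theorem configSeries_eq_boundarySeries : configSeries = boundarySeries :=
  boundaryRecursion_configSeries.unique boundaryRecursion_boundarySeries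

end ShiftedWords

/-! ### Partitions and the fermionic formula -/

section PaddedPartitions

/-- The positive parts of a padded partition. -/
def positiveParts (s : Multiset ℕ) : Multiset ℕ := s.filter (0 < ·)

/-- The padded partition with `m` parts obtained by adding parts equal to zero. -/
def padZeros (m : ℕ) (s : Multiset ℕ) : Multiset ℕ :=
  s + Multiset.replicate (m - Multiset.card s) 0

theorem positiveParts_add_replicate (s : Multiset ℕ) :
    positiveParts s + Multiset.replicate (s.count 0) 0 = s := by
  have hzero : s.filter (¬ 0 < ·) = Multiset.replicate (s.count 0) 0 := by
    simp [← Multiset.filter_eq']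
  rw [positiveParts, ← hzero, Multiset.filter_add_not]

theorem padZeros_positiveParts (s : Multiset ℕ) :
    padZeros (Multiset.card s) (positiveParts s) = s := by
  have hcard := congrArg Multiset.card (positiveParts_add_replicate s)
  rw [Multiset.card_add, Multiset.card_replicate] at hcard
  rw [padZeros, ← hcard, Nat.add_sub_cancel_left, positiveParts_add_replicate]

theorem positiveParts_padZeros (m : ℕ) {s : Multiset ℕ} (hs : ∀ a ∈ s, 0 < a) :
    positiveParts (padZeros m s) = s := by
  have hzero : (Multiset.replicate (m - Multiset.card s) 0).filter (0 < ·) = 0 :=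
    Multiset.filter_eq_nil.2 fun a ha ↦ (Multiset.eq_of_mem_replicate ha).not_gt
  rw [positiveParts, padZeros, Multiset.filter_add, Multiset.filter_eq_self.2 hs, hzero, add_zero]

theorem card_padZeros {m : ℕ} {s : Multiset ℕ} (hs : Multiset.card s ≤ m) :
    Multiset.card (padZeros m s) = m := by
  simp [padZeros, hs]

theorem sum_positiveParts (s : Multiset ℕ) : (positiveParts s).sum = s.sum := by
  conv_rhs => rw [← positiveParts_add_replicate s]
  simp

/-- Padded partitions correspond to partitions together with a bound for the number of parts. -/
def paddedPartitionsEquiv (k : ℕ) : PaddedPartitions k ≃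
    {p : (Fin 2 → Fin k → ℕ) × (Fin 2 → Fin k → Multiset ℕ) //
      (∀ i j, ∀ a ∈ p.2 i j, 0 < a) ∧ ∀ i j, Multiset.card (p.2 i j) ≤ p.1 i j} where
  toFun P := ⟨(content P, fun i j ↦ positiveParts (P i j)),
    fun _ _ _ ha ↦ (Multiset.mem_filter.1 ha).2,
    fun _ _ ↦ Multiset.card_le_card (Multiset.filter_le _ _)⟩
  invFun p := fun i j ↦ padZeros (p.1.1 i j) (p.1.2 i j)
  left_inv P := funext₂ fun i j ↦ padZeros_positiveParts (P i j)
  right_inv p := Subtype.ext <| Prod.ext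
    (funext₂ fun i j ↦ card_padZeros (p.2.2 i j))
    (funext₂ fun i j ↦ positiveParts_padZeros _ (p.2.1 i j))

end PaddedPartitions

section Coefficients

open MvPowerSeries

/-- The exponent of the monomial of charge `(n₁, n₂)` and degree `d`. -/
noncomputable def multidegree (n₁ n₂ d : ℕ) : Fin 3 →₀ ℕ :=
  Finsupp.single 0 n₁ + Finsupp.single 1 n₂ + Finsupp.single 2 d

theorem eq_multidegree_iff {n : Fin 3 →₀ ℕ} {n₁ n₂ d : ℕ} :
    n = multidegree n₁ n₂ d ↔ n 0 = n₁ ∧ n 1 = n₂ ∧ n 2 = d := by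
  simp [Finsupp.ext_iff, Fin.forall_fin_succ, multidegree]

theorem configWeight_zero_eq_multidegree_iff {a : ℕ →₀ ℕ} {n₁ n₂ d : ℕ} :
    configWeight 0 a = multidegree n₁ n₂ d ↔ configCharge a = (n₁, n₂) ∧ configDegree a = d := by
  have hfst (i : ℕ) : siteWeight i 0 = if Even i then 1 else 0 := by
    rw [siteWeight]
    split_ifs <;> simp
  have hsnd (i : ℕ) : siteWeight i 1 = if Odd i then 1 else 0 := by
    by_cases hi : Even i
    · simp [siteWeight, hi, Nat.not_odd_iff_even.2 hi]
    · simp [siteWeight, hi, Nat.not_even_iff_odd.1 hi]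
  rw [eq_multidegree_iff, configCharge, configDegree, Prod.mk.injEq, and_assoc]
  simp [configWeight, hfst, hsnd, siteWeight_two, mul_comm]

theorem coeff_configSeries_zero (k₀ k₁ k₂ n₁ n₂ d : ℕ) :
    coeff (multidegree n₁ n₂ d) (configSeries 0 k₀ k₁ k₂) =
      (Nat.card {a : ℕ →₀ ℕ // IsAdmissibleConfig (k₀ + k₁ + k₂) k₀ k₁ a ∧
        configCharge a = (n₁, n₂) ∧ configDegree a = d} : ℤ) := by
  simp only [configSeries, coeff_enumerator, configWeight_zero_eq_multidegree_iff]
  rfl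

theorem coeff_fermionicSeries (k : ℕ) (L₁ L₂ : ℕ → ℕ) (n₁ n₂ d : ℕ) :
    coeff (multidegree n₁ n₂ d) (fermionicSeries k 0 1 L₁ L₂) =
      (Nat.card {p : (Fin 2 → Fin k → ℕ) × (Fin 2 → Fin k → Multiset ℕ) //
        charge (p.1 0) = n₁ ∧ charge (p.1 1) = n₂ ∧ (∀ i j, ∀ a ∈ p.2 i j, 0 < a) ∧
        (∀ i j, Multiset.card (p.2 i j) ≤ p.1 i j) ∧
        ∑ i, ∑ j, ((p.2 i j).sum : ℤ) = (d : ℤ) - exponent L₁ L₂ p.1} : ℤ) := by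
  let Q (p : (Fin 2 → Fin k → ℕ) × (Fin 2 → Fin k → Multiset ℕ)) : Prop :=
    charge (p.1 0) = n₁ ∧ charge (p.1 1) = n₂ ∧
      ∑ i, ∑ j, ((p.2 i j).sum : ℤ) = (d : ℤ) - exponent L₁ L₂ p.1
  have hQ (P : PaddedPartitions k) :
      fermionicWeight 0 1 L₁ L₂ P = multidegree n₁ n₂ d ↔ Q (paddedPartitionsEquiv k P) := by
    have hcoords : fermionicWeight 0 1 L₁ L₂ P = multidegree n₁ n₂ d ↔
        charge (content P 0) = n₁ ∧ charge (content P 1) = n₂ ∧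
          size P + exponent L₁ L₂ (content P) = d := by
      simp [eq_multidegree_iff, fermionicWeight]
    have hsize : ∑ i, ∑ j, ((positiveParts (P i j)).sum : ℤ) = size P := by
      simp only [sum_positiveParts, size, Nat.cast_sum]
    have hdegree : size P + exponent L₁ L₂ (content P) = d ↔
        ∑ i, ∑ j, ((positiveParts (P i j)).sum : ℤ) = d - exponent L₁ L₂ (content P) := by
      rw [hsize]
      omega
    rw [hcoords, hdegree]
    rfl
  rw [fermionicSeries, coeff_enumerator, ← Nat.card_coe_set_eq]
  refine congrArg Nat.cast (Nat.card_congr ?_)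
  refine (Equiv.subtypeEquivRight fun P ↦ ?_).trans <|
    ((paddedPartitionsEquiv k).subtypeEquiv hQ).trans <|
    (Equiv.subtypeSubtypeEquivSubtypeInter _ Q).trans (Equiv.subtypeEquivRight fun p ↦ ?_)
  · simp
  · simp only [Q]
    tauto

theorem fermionicExponent_eq_exponent (k k₀ k₁ : ℕ) (M : Fin 2 → Fin k → ℕ) :
    fermionicExponent k k₀ k₁ M =
      exponent (fun c ↦ c + 1 - k₀) (fun c ↦ c + 1 - (k₀ + k₁)) M := by
  have hcross (j j' : ℕ) : max 0 ((j : ℤ) + 1 + (j' + 1) - k) = ((j + 1 + (j' + 1) - k : ℕ) : ℤ) :=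
    by omega
  have hfst (j : ℕ) : max 0 ((j : ℤ) + 1 - k₀) = ((j + 1 - k₀ : ℕ) : ℤ) := by omega
  have hsnd (j : ℕ) : max 0 ((j : ℤ) + 1 - k₀ - k₁) = ((j + 1 - (k₀ + k₁) : ℕ) : ℤ) := by omega
  simp only [fermionicExponent, hcross, hfst, hsnd, exponent, sameColorForm, crossColorForm,
    linearForm, Nat.cast_add, Nat.cast_sum, Nat.cast_mul]

theorem prefixSum_replicate {a c : ℕ} (x : ℕ) (hc : c < a) :
    prefixSum (List.replicate a x) c = (c + 1) * x := by
  simp [prefixSum, min_eq_left (Nat.succ_le_of_lt hc)]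

theorem prefixSum_replicate_zero_append {a b c : ℕ} (hc : c < a + b) :
    prefixSum (List.replicate a 0 ++ List.replicate b 1) c = c + 1 - a := by
  simp only [prefixSum, List.take_append, List.take_replicate, List.length_replicate,
    List.sum_append, List.sum_replicate, smul_eq_mul, mul_zero, mul_one]
  omega

theorem boundarySeries_zero_of_mul_eq_zero {k₀ k₂ : ℕ} (k₁ : ℕ) (h : k₀ * k₂ = 0) :
    boundarySeries 0 k₀ k₁ k₂ = fermionicSeries (k₀ + k₁ + k₂) 0 1
      (fun c ↦ c + 1 - k₀) (fun c ↦ c + 1 - (k₀ + k₁)) := by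
  obtain rfl | rfl := mul_eq_zero.1 h
  · have hword : boundarySeries 0 0 k₁ k₂ =
        cut (wordSeries 0 1) (List.replicate k₂ (1, 1)) (List.replicate k₁ (1, 0)) := by
      rw [boundarySeries, boundary_zero _ _ 0, boundary_wordShift, ladderSum_zero_apply]
      rfl
    rw [hword, cut_wordSeries, List.length_replicate, List.length_replicate, add_comm k₂, zero_add]
    refine fermionicSeries_congr _ _ _ (fun c hc ↦ ?_) fun c hc ↦ ?_
    · simp only [List.map_replicate, List.reverse_replicate, List.replicate_append_replicate]
      rw [prefixSum_replicate 1 (by omega), mul_one, Nat.sub_zero]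
    · simp only [List.map_replicate, List.reverse_replicate]
      exact prefixSum_replicate_zero_append hc
  · have hword : boundarySeries 0 k₀ k₁ 0 =
        cut (wordSeries 0 1) (List.replicate k₀ (0, 0)) (List.replicate k₁ (1, 0)) := by
      simp [boundarySeries, boundary, cut]
    rw [hword, cut_wordSeries, List.length_replicate, List.length_replicate]
    refine fermionicSeries_congr _ _ _ (fun c hc ↦ ?_) fun c hc ↦ ?_
    · simp only [List.map_replicate, List.reverse_replicate]
      exact prefixSum_replicate_zero_append hc
    · simp only [List.map_replicate, List.reverse_replicate, List.replicate_append_replicate]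
      rw [prefixSum_replicate 0 (by omega), mul_zero]
      omega

end Coefficients

end FermionicFormula

/-- The fermionic formula for `(k,3)`-admissible configurations: the
number of configurations of charge `(n₁, n₂)` and degree `d` equals the sum over charge
contents `M` of the number of `2k`-tuples of partitions of total size `d - E(M)` with
`λ^{(i,c)}` having at most `M_{i,c}` parts. -/
theorem count_admissible_configs_fermionic
    (k k₀ k₁ k₂ : ℕ) (hk : 1 ≤ k) (hsum : k₀ + k₁ + k₂ = k) (hmin : k₀ * k₂ = 0)
    (n₁ n₂ d : ℕ) :
    Nat.card {a : ℕ →₀ ℕ //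
        IsAdmissibleConfig k k₀ k₁ a ∧ configCharge a = (n₁, n₂) ∧ configDegree a = d}
    = Nat.card {MP : (Fin 2 → Fin k → ℕ) × (Fin 2 → Fin k → Multiset ℕ) //
        (∑ j : Fin k, ((j : ℕ) + 1) * MP.1 0 j = n₁) ∧
        (∑ j : Fin k, ((j : ℕ) + 1) * MP.1 1 j = n₂) ∧
        (∀ i j, ∀ x ∈ MP.2 i j, 0 < x) ∧
        (∀ i j, Multiset.card (MP.2 i j) ≤ MP.1 i j) ∧
        (∑ i : Fin 2, ∑ j : Fin k, ((MP.2 i j).sum : ℤ))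
          = (d : ℤ) - fermionicExponent k k₀ k₁ MP.1} := by
  subst hsum
  apply Nat.cast_injective (R := ℤ)
  simp only [FermionicFormula.fermionicExponent_eq_exponent]
  rw [← FermionicFormula.coeff_configSeries_zero, FermionicFormula.configSeries_eq_boundarySeries,
    FermionicFormula.boundarySeries_zero_of_mul_eq_zero k₁ hmin]
  exact FermionicFormula.coeff_fermionicSeries (k₀ + k₁ + k₂) _ _ n₁ n₂ d
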